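/- Let A₀ : D(A₀) ⊂ H₀ → H₁ and A₁ : D(A₁) ⊂ H₁ → H₂ be densely defined closed linear operators between Hilbert spaces satisfying the complex property R(A₀) ⊂ N(A₁). Let H₀⁺, H₁⁺ be regular subspaces for A₀, A₁ with compact embeddings ι₀ : H₀⁺ → H₀ and ι₁ : H₁⁺ → H₁, and suppose there exist graph-norm bounded linear operators Q₁ : D(A₁) → H₁⁺ and Q₀ : D(A₁) → H₀⁺ with x = ι₁(Q₁x) + A₀(ι₀(Q₀x)) for all x ∈ D(A₁). Then the range R(A₁) is closed in H₂ and there exists a bounded linear regular potential operator P : R(A₁) → H₁⁺ satisfying A₁(ι₁(Pz)) = z for all z ∈ R(A₁); in particular R(A₁) = A₁(ι₁(H₁⁺)). -/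

import Mathlib

/-!
Since `A₁ A₀ = 0`, the decomposition gives `A₁ x = A₁ (ι₁ (Q₁ x))`, so `Q₁` turns any potential of
`z` into a regular one. Choosing the potential `x` in the orthogonal complement of `N(A₁)`
makes the choice linear, and `P z = Q₁ x` is bounded by the Friedrichs/Poincaré type estimate
`‖x‖ ≤ C ‖A₁ x‖` on `D(A₁) ∩ N(A₁)ᗮ` (`exists_norm_le_of_compact_decomposition`).

That estimate is proved by compactness: modulo `N(A₁)` the vector `x` equals `ι₁ (Q₁ x)`, hence
`x ∈ N(A₁)ᗮ` is the orthogonal projection of `ι₁ (Q₁ x)`. A normalized sequence with `A₁ xₙ → 0`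
thus has a convergent subsequence, whose limit lies in `N(A₁) ∩ N(A₁)ᗮ = 0`, although it has
norm one. Closedness of the range follows from `P`: if `zₙ → z` in `H₂` with `zₙ` in the range,
then `P zₙ` is Cauchy, and applying the bounded operator `A₁ ι₁` to its limit yields `z`.
-/

open Filter Topology

noncomputable section

/-- The kernel `N(A)` of a partially defined linear operator `A`, as a submodule of the
ambient space. -/
def LinearPMap.kerSub {𝕜 E F : Type*} [RCLike 𝕜] [NormedAddCommGroup E]
    [InnerProductSpace 𝕜 E] [NormedAddCommGroup F] [InnerProductSpace 𝕜 F]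
    (A : E →ₗ.[𝕜] F) : Submodule 𝕜 E :=
  (LinearMap.ker A.toFun).map A.domain.subtype

theorem LinearPMap.mem_kerSub_iff {𝕜 E F : Type*} [RCLike 𝕜] [NormedAddCommGroup E]
    [InnerProductSpace 𝕜 E] [NormedAddCommGroup F] [InnerProductSpace 𝕜 F]
    (A : E →ₗ.[𝕜] F) (x : E) : x ∈ A.kerSub ↔ ∃ h : x ∈ A.domain, A ⟨x, h⟩ = 0 := by
  constructor
  · rintro ⟨y, hy, rfl⟩
    exact ⟨y.2, hy⟩
  · rintro ⟨h, hx⟩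
    exact ⟨⟨x, h⟩, hx, rfl⟩

theorem LinearPMap.mem_kerSub_of_tendsto {𝕜 E F : Type*} [RCLike 𝕜] [NormedAddCommGroup E]
    [InnerProductSpace 𝕜 E] [NormedAddCommGroup F] [InnerProductSpace 𝕜 F]
    {A : E →ₗ.[𝕜] F} (hA : A.IsClosed) (x : ℕ → A.domain) (l : E)
    (hx : Tendsto (fun n => (x n : E)) atTop (𝓝 l))
    (hAx : Tendsto (fun n => A (x n)) atTop (𝓝 0)) : l ∈ A.kerSub := by
  have hg : (l, (0 : F)) ∈ (A.graph : Set (E × F)) :=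
    IsClosed.mem_of_tendsto hA (hx.prodMk_nhds hAx)
      (Eventually.of_forall fun n => A.mem_graph (x n))
  obtain ⟨y, hy1, hy2⟩ := (LinearPMap.mem_graph_iff A).1 hg
  obtain rfl : (y : E) = l := hy1
  exact (A.mem_kerSub_iff _).2 ⟨y.2, hy2⟩

theorem LinearPMap.isClosed_kerSub {𝕜 E F : Type*} [RCLike 𝕜] [NormedAddCommGroup E]
    [InnerProductSpace 𝕜 E] [NormedAddCommGroup F] [InnerProductSpace 𝕜 F]
    {A : E →ₗ.[𝕜] F} (hA : A.IsClosed) : _root_.IsClosed (A.kerSub : Set E) := by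
  refine IsSeqClosed.isClosed fun x l hx hl => ?_
  choose h h0 using fun n => (A.mem_kerSub_iff _).1 (hx n)
  exact LinearPMap.mem_kerSub_of_tendsto hA (fun n => ⟨x n, h n⟩) l hl
    (by simpa only [h0] using tendsto_const_nhds)

/-- The Friedrichs/Poincaré type estimate for a closed operator `A` whose domain is, modulo
`N(A)`, a graph-norm bounded image of a compactly embedded space. -/
theorem exists_norm_le_of_compact_decomposition {𝕜 E F G : Type*} [RCLike 𝕜]
    [NormedAddCommGroup E] [InnerProductSpace 𝕜 E] [CompleteSpace E]
    [NormedAddCommGroup F] [InnerProductSpace 𝕜 F]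
    [NormedAddCommGroup G] [InnerProductSpace 𝕜 G]
    (A : E →ₗ.[𝕜] F) (hA : A.IsClosed) (ι : G →L[𝕜] E)
    (hcpt : ∀ u : ℕ → G, (∃ C : ℝ, ∀ n, ‖u n‖ ≤ C) →
      ∃ φ : ℕ → ℕ, StrictMono φ ∧ ∃ l : E, Tendsto (fun n => ι (u (φ n))) atTop (𝓝 l))
    (Q : A.domain →ₗ[𝕜] G) (C : ℝ) (hQ : ∀ x : A.domain, ‖Q x‖ ≤ C * (‖(x : E)‖ + ‖A x‖))
    (hdec : ∀ x : A.domain, (x : E) - ι (Q x) ∈ A.kerSub) :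
    ∃ K : ℝ, ∀ x : A.domain, (x : E) ∈ A.kerSubᗮ → ‖(x : E)‖ ≤ K * ‖A x‖ := by
  by_contra! hcon
  choose x hxN hx using fun n : ℕ => hcon ((n : ℝ) + 1)
  have hxpos : ∀ n, 0 < ‖(x n : E)‖ := fun n => lt_of_le_of_lt (by positivity) (hx n)
  let y : ℕ → A.domain := fun n => ((‖(x n : E)‖⁻¹ : ℝ) : 𝕜) • x n
  have hyN : ∀ n, (y n : E) ∈ A.kerSubᗮ := fun n => Submodule.smul_mem _ _ (hxN n)
  have hynorm : ∀ n, ‖(y n : E)‖ = 1 := by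
    intro n
    simp only [y, Submodule.coe_smul, norm_smul, RCLike.norm_ofReal, abs_inv, abs_norm]
    exact inv_mul_cancel₀ (hxpos n).ne'
  have hAy : ∀ n, ‖A (y n)‖ ≤ 1 / ((n : ℝ) + 1) := by
    intro n
    have hn : (0 : ℝ) < (n : ℝ) + 1 := by positivity
    simp only [y, LinearPMap.map_smul, norm_smul, RCLike.norm_ofReal, abs_inv, abs_norm]
    rw [inv_mul_le_iff₀ (hxpos n), mul_one_div, le_div_iff₀ hn, mul_comm]
    exact (hx n).le
  have hAy0 : Tendsto (fun n => A (y n)) atTop (𝓝 0) :=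
    squeeze_zero_norm hAy tendsto_one_div_add_atTop_nhds_zero_nat
  have hQbd : ∀ n, ‖Q (y n)‖ ≤ |C| * 2 := by
    intro n
    have h1 : ‖A (y n)‖ ≤ 1 := (hAy n).trans (by
      rw [div_le_one (by positivity)]
      linarith [n.cast_nonneg (α := ℝ)])
    calc ‖Q (y n)‖ ≤ C * (‖(y n : E)‖ + ‖A (y n)‖) := hQ _
      _ ≤ |C| * (‖(y n : E)‖ + ‖A (y n)‖) := by gcongr; exact le_abs_self C
      _ ≤ |C| * 2 := by gcongr; linarith [hynorm n]
  obtain ⟨φ, hφ, l, hl⟩ := hcpt (fun n => Q (y n)) ⟨_, hQbd⟩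
  have : CompleteSpace A.kerSub := (LinearPMap.isClosed_kerSub hA).completeSpace_coe
  -- `y n` is the projection of `ι (Q (y n))` onto `N(A)ᗮ`, so compactness of `ι` applies to it.
  have hproj : ∀ n, A.kerSubᗮ.starProjection (ι (Q (y n))) = y n := by
    intro n
    refine Submodule.eq_starProjection_of_mem_of_inner_eq_zero (hyN n) ?_
    intro w hw
    rw [← neg_sub, inner_neg_left, hw _ (hdec (y n)), neg_zero]
  have hylim : Tendsto (fun n => (y (φ n) : E)) atTop (𝓝 (A.kerSubᗮ.starProjection l)) := by
    simpa only [Function.comp_def, hproj] using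
      (A.kerSubᗮ.starProjection.continuous.tendsto l).comp hl
  have hmem := LinearPMap.mem_kerSub_of_tendsto hA (fun n => y (φ n)) _ hylim
    (hAy0.comp hφ.tendsto_atTop)
  have hzero : A.kerSubᗮ.starProjection l = 0 :=
    inner_self_eq_zero.1 (Submodule.starProjection_apply_mem A.kerSubᗮ l _ hmem)
  have hone : ‖A.kerSubᗮ.starProjection l‖ = 1 :=
    tendsto_nhds_unique hylim.norm (by simpa only [hynorm] using tendsto_const_nhds)
  simp [hzero] at hone

/-- Let `A₀, A₁` be a Hilbert complex (`R(A₀) ⊆ N(A₁)`), with regular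
subspaces `H₀p` (for `A₀`) and `H₁p` (for `A₁`) whose embeddings `ι₀, ι₁` are compact, and
assume a bounded regular decomposition `D(A₁) = H₁p + A₀ H₀p` given by graph-norm bounded
operators `Q₁, Q₀`.  Then `R(A₁)` is closed in `H₂` and there is a bounded linear regular
potential operator `P : R(A₁) → H₁p` with `A₁ (ι₁ (P z)) = z` on `R(A₁)`; in particular
`R(A₁) = A₁ (ι₁ (H₁p))`. -/
theorem closed_range_and_regular_potential_of_bounded_regular_decomposition
    {𝕜 H₀ H₁ H₂ H₀p H₁p : Type*} [RCLike 𝕜]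
    [NormedAddCommGroup H₀] [InnerProductSpace 𝕜 H₀] [CompleteSpace H₀]
    [NormedAddCommGroup H₁] [InnerProductSpace 𝕜 H₁] [CompleteSpace H₁]
    [NormedAddCommGroup H₂] [InnerProductSpace 𝕜 H₂] [CompleteSpace H₂]
    [NormedAddCommGroup H₀p] [InnerProductSpace 𝕜 H₀p] [CompleteSpace H₀p]
    [NormedAddCommGroup H₁p] [InnerProductSpace 𝕜 H₁p] [CompleteSpace H₁p]
    (A₀ : H₀ →ₗ.[𝕜] H₁) (A₁ : H₁ →ₗ.[𝕜] H₂)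
    (h₀dense : Dense (A₀.domain : Set H₀)) (h₀closed : A₀.IsClosed)
    (h₁dense : Dense (A₁.domain : Set H₁)) (h₁closed : A₁.IsClosed)
    (hcomplex : LinearMap.range A₀.toFun ≤ A₁.kerSub)
    (ι₀ : H₀p →L[𝕜] H₀) (hι₀inj : Function.Injective ι₀)
    (hι₀dom : ∀ u : H₀p, ι₀ u ∈ A₀.domain)
    (hι₀graph : ∃ C : ℝ, ∀ u : H₀p, ‖A₀ ⟨ι₀ u, hι₀dom u⟩‖ ≤ C * ‖u‖)
    (hι₀cpt : ∀ u : ℕ → H₀p, (∃ C : ℝ, ∀ n, ‖u n‖ ≤ C) →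
      ∃ φ : ℕ → ℕ, StrictMono φ ∧
        ∃ l : H₀, Tendsto (fun n => ι₀ (u (φ n))) atTop (𝓝 l))
    (ι₁ : H₁p →L[𝕜] H₁) (hι₁inj : Function.Injective ι₁)
    (hι₁dom : ∀ u : H₁p, ι₁ u ∈ A₁.domain)
    (hι₁graph : ∃ C : ℝ, ∀ u : H₁p, ‖A₁ ⟨ι₁ u, hι₁dom u⟩‖ ≤ C * ‖u‖)
    (hι₁cpt : ∀ u : ℕ → H₁p, (∃ C : ℝ, ∀ n, ‖u n‖ ≤ C) →
      ∃ φ : ℕ → ℕ, StrictMono φ ∧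
        ∃ l : H₁, Tendsto (fun n => ι₁ (u (φ n))) atTop (𝓝 l))
    (Q₁ : A₁.domain →ₗ[𝕜] H₁p) (Q₀ : A₁.domain →ₗ[𝕜] H₀p)
    (hQ₁bd : ∃ C : ℝ, ∀ x : A₁.domain, ‖Q₁ x‖ ≤ C * (‖(x : H₁)‖ + ‖A₁ x‖))
    (hQ₀bd : ∃ C : ℝ, ∀ x : A₁.domain, ‖Q₀ x‖ ≤ C * (‖(x : H₁)‖ + ‖A₁ x‖))
    (hdeco : ∀ x : A₁.domain,
      (x : H₁) = ι₁ (Q₁ x) + A₀ ⟨ι₀ (Q₀ x), hι₀dom (Q₀ x)⟩) :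
    IsClosed (LinearMap.range A₁.toFun : Set H₂) ∧
    (∃ P : LinearMap.range A₁.toFun →ₗ[𝕜] H₁p,
      (∃ C : ℝ, ∀ z : LinearMap.range A₁.toFun, ‖P z‖ ≤ C * ‖(z : H₂)‖) ∧
      (∀ z : LinearMap.range A₁.toFun, A₁ ⟨ι₁ (P z), hι₁dom (P z)⟩ = (z : H₂))) ∧
    (∀ z : H₂, z ∈ LinearMap.range A₁.toFun ↔
      ∃ u : H₁p, A₁ ⟨ι₁ u, hι₁dom u⟩ = z) := by
  obtain ⟨C₁, hC₁⟩ := hQ₁bd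
  obtain ⟨Cι, hCι⟩ := hι₁graph
  have hdec : ∀ x : A₁.domain, (x : H₁) - ι₁ (Q₁ x) ∈ A₁.kerSub := by
    intro x
    have h : (x : H₁) - ι₁ (Q₁ x) = A₀ ⟨ι₀ (Q₀ x), hι₀dom (Q₀ x)⟩ :=
      sub_eq_of_eq_add' (hdeco x)
    rw [h]
    exact hcomplex ⟨_, rfl⟩
  have hAQ : ∀ x : A₁.domain, A₁ ⟨ι₁ (Q₁ x), hι₁dom (Q₁ x)⟩ = A₁ x := by
    intro x
    obtain ⟨h, h0⟩ := (A₁.mem_kerSub_iff _).1 (hdec x)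
    have h1 : (⟨_, h⟩ : A₁.domain) = x - ⟨ι₁ (Q₁ x), hι₁dom (Q₁ x)⟩ := rfl
    rw [h1, LinearPMap.map_sub] at h0
    exact (sub_eq_zero.1 h0).symm
  obtain ⟨K, hK⟩ :=
    exists_norm_le_of_compact_decomposition A₁ h₁closed ι₁ hι₁cpt Q₁ C₁ hC₁ hdec
  have : CompleteSpace A₁.kerSub := (LinearPMap.isClosed_kerSub h₁closed).completeSpace_coe
  -- `B` is the reduced operator: `A₁` restricted to `D(A₁) ∩ N(A₁)ᗮ`, a bijection onto `R(A₁)`.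
  let M : Submodule 𝕜 A₁.domain := A₁.kerSubᗮ.comap A₁.domain.subtype
  let B : M →ₗ[𝕜] LinearMap.range A₁.toFun := A₁.toFun.rangeRestrict.domRestrict M
  have hB : ∀ x : M, (B x : H₂) = A₁ (x : A₁.domain) := fun _ => rfl
  have hBinj : Function.Injective B := by
    rw [← LinearMap.ker_eq_bot, LinearMap.ker_eq_bot']
    intro x hx
    have h0 : A₁ (x : A₁.domain) = 0 := by rw [← hB, hx]; rfl
    have h1 := hK x x.2
    rw [h0, norm_zero, mul_zero, norm_le_zero_iff] at h1
    exact Subtype.ext (Subtype.ext h1)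
  have hBsurj : Function.Surjective B := by
    rintro ⟨_, x, rfl⟩
    obtain ⟨h, h0⟩ := (A₁.mem_kerSub_iff _).1
      (Submodule.starProjection_apply_mem A₁.kerSub (x : H₁))
    refine ⟨⟨x - ⟨_, h⟩, Submodule.sub_starProjection_mem_orthogonal (x : H₁)⟩, ?_⟩
    apply Subtype.ext
    rw [hB]
    change A₁ (x - ⟨_, h⟩) = A₁ x
    rw [LinearPMap.map_sub, h0, sub_zero]
  let e : M ≃ₗ[𝕜] LinearMap.range A₁.toFun := LinearEquiv.ofBijective B ⟨hBinj, hBsurj⟩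
  have he : ∀ z, A₁ (e.symm z : A₁.domain) = (z : H₂) := fun z =>
    congrArg Subtype.val (e.apply_symm_apply z)
  let P : LinearMap.range A₁.toFun →ₗ[𝕜] H₁p := Q₁ ∘ₗ M.subtype ∘ₗ e.symm.toLinearMap
  have hP : ∀ z, A₁ ⟨ι₁ (P z), hι₁dom (P z)⟩ = (z : H₂) := fun z =>
    (hAQ (e.symm z : A₁.domain)).trans (he z)
  have hPbd : ∀ z, ‖P z‖ ≤ |C₁| * (K + 1) * ‖(z : H₂)‖ := by
    intro z
    have h1 := hK (e.symm z : A₁.domain) (e.symm z).2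
    have h2 := hC₁ (e.symm z : A₁.domain)
    rw [he] at h1 h2
    calc ‖P z‖ ≤ C₁ * (‖((e.symm z : A₁.domain) : H₁)‖ + ‖(z : H₂)‖) := h2
      _ ≤ |C₁| * (‖((e.symm z : A₁.domain) : H₁)‖ + ‖(z : H₂)‖) := by
        gcongr
        exact le_abs_self C₁
      _ ≤ |C₁| * (K * ‖(z : H₂)‖ + ‖(z : H₂)‖) := by gcongr
      _ = |C₁| * (K + 1) * ‖(z : H₂)‖ := by ring
  refine ⟨?_, ⟨P, ⟨_, hPbd⟩, hP⟩, fun z => ⟨fun hz => ⟨P ⟨z, hz⟩, hP ⟨z, hz⟩⟩, ?_⟩⟩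
  · let T : H₁p →L[𝕜] H₂ := LinearMap.mkContinuous
      (A₁.toFun ∘ₗ (ι₁ : H₁p →ₗ[𝕜] H₁).codRestrict A₁.domain hι₁dom) Cι hCι
    let Pc : LinearMap.range A₁.toFun →L[𝕜] H₁p := P.mkContinuous _ hPbd
    refine IsSeqClosed.isClosed fun z l hz hl => ?_
    have hcau : CauchySeq (fun n => (⟨z n, hz n⟩ : LinearMap.range A₁.toFun)) :=
      isUniformEmbedding_subtype_val.isUniformInducing.cauchy_map_iff.1 hl.cauchySeq
    obtain ⟨u, hu⟩ := cauchySeq_tendsto_of_complete (Pc.uniformContinuous.comp_cauchySeq hcau)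
    have hTu : Tendsto z atTop (𝓝 (T u)) :=
      ((T.continuous.tendsto u).comp hu).congr fun n => hP ⟨z n, hz n⟩
    rw [tendsto_nhds_unique hl hTu]
    exact ⟨⟨ι₁ u, hι₁dom u⟩, rfl⟩
  · rintro ⟨u, rfl⟩
    exact ⟨_, rfl⟩
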